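/- The abelianization of the principal congruence subgroup Γ(1+i) of PSL(2,ℤ[i]) is isomorphic to (ℤ/2ℤ)⁵. -/

import Mathlib

/-- `SL(2, ℤ[i])`: 2×2 matrices over the Gaussian integers of determinant 1. -/
abbrev SL2Zi := Matrix.SpecialLinearGroup (Fin 2) GaussianInt

instance : Fact (Even (Fintype.card (Fin 2))) := ⟨by decide⟩

/-- The subgroup `{±I}` of `SL(2, ℤ[i])`. -/
def PM : Subgroup SL2Zi := Subgroup.zpowers (-1)

instance : PM.Normal := by
  constructor
  intro x hx g
  obtain ⟨k, rfl⟩ := Subgroup.mem_zpowers_iff.mp hx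
  have hc : Commute g ((-1 : SL2Zi) ^ k) := (Commute.neg_one_right g).zpow_right k
  have h : g * (-1 : SL2Zi) ^ k * g⁻¹ = (-1 : SL2Zi) ^ k := by
    rw [hc.eq, mul_assoc, mul_inv_cancel, mul_one]
  rw [h]
  exact Subgroup.mem_zpowers_iff.mpr ⟨k, rfl⟩

/-- `PSL(2, ℤ[i]) = SL(2, ℤ[i]) / {±I}`. -/
abbrev PSL2Zi := SL2Zi ⧸ PM

/-- The entrywise reduction homomorphism `SL(2, ℤ[i]) → SL(2, ℤ[i]/(β))`. -/
def redMap (β : GaussianInt) :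
    SL2Zi →* Matrix.SpecialLinearGroup (Fin 2) (GaussianInt ⧸ Ideal.span {β}) :=
  Matrix.SpecialLinearGroup.map (Ideal.Quotient.mk (Ideal.span {β}))

/-- The principal congruence subgroup `Γ(β)` of `PSL(2, ℤ[i])`: the image in `PSL(2, ℤ[i])`
of the kernel of the reduction map modulo `β`. -/
def Gamma (β : GaussianInt) : Subgroup PSL2Zi :=
  ((redMap β).ker).map (QuotientGroup.mk' PM)

/-!
Let `λ = 1 + i`, so that `λ ^ 2 = 2 i`. For a matrix `A ≡ 1` modulo `λ` exactly one entry of each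
column is divisible by `λ`. Dividing one entry of the first column by `λ` times the other leaves a
remainder of at most the norm of the divisor, and equality is excluded because the two norms differ
in parity. The Euclidean algorithm therefore writes `A` as a product of transvections with entries
`λ` and `λ i` and powers of `diag(i, -i)`.

In `PSL(2, ℤ[i])` the matrix `diag(i, -i)` is an involution, and it conjugates every transvection
to its inverse, so the abelianization is generated by five elements of order at most two. They are
independent because they are dual to five characters with values in `ℤ/2ℤ`: the coordinates modulo
`2` of `A₀₀ A₀₁ / λ` and of `A₁₁ A₁₀ / λ`, and the imaginary part of `A₀₀`.
-/

open Matrix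
open scoped MatrixGroups

theorem bijective_of_map_generator_eq_single {A ι : Type*} [AddCommGroup A] [Finite ι]
    [DecidableEq ι] {n : ℕ} {t : ι → A} (ht : AddSubgroup.closure (Set.range t) = ⊤)
    (htn : ∀ i, n • t i = 0) {f : A →+ (ι → ZMod n)} (hft : ∀ i, f (t i) = Pi.single i 1) :
    Function.Bijective f := by
  cases nonempty_fintype ι
  have hf (c : ι → ℤ) : f (∑ i, c i • t i) = fun i => (c i : ZMod n) := by
    ext j
    simp [hft, Finset.sum_apply, Pi.single_apply]
  constructor
  · refine (injective_iff_map_eq_zero f).2 fun x hx => ?_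
    obtain ⟨c, rfl⟩ := AddSubgroup.mem_closure_range_iff_of_fintype.1 (ht ▸ AddSubgroup.mem_top x)
    refine Finset.sum_eq_zero fun i _ => ?_
    have hci : (c i : ZMod n) = 0 := by simpa [hf] using congrFun hx i
    obtain ⟨d, hd⟩ := (ZMod.intCast_zmod_eq_zero_iff_dvd _ _).1 hci
    rw [hd, mul_comm, mul_smul, natCast_zsmul, htn, smul_zero]
  · intro v
    choose c hc using fun i => ZMod.intCast_surjective (v i)
    exact ⟨_, (hf c).trans (funext hc)⟩

theorem bijective_abelianizationLift_of_map_generator_eq_single {G ι : Type*} [Group G]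
    [Finite ι] [DecidableEq ι] {n : ℕ} {g : ι → G} (hg : Subgroup.closure (Set.range g) = ⊤)
    (hgn : ∀ i, Abelianization.of (g i) ^ n = 1) {χ : G →* Multiplicative (ι → ZMod n)}
    (hχ : ∀ i, χ (g i) = .ofAdd (Pi.single i 1)) :
    Function.Bijective (Abelianization.lift χ) := by
  have hcl : Subgroup.closure (Set.range (Abelianization.of ∘ g)) = ⊤ := by
    rw [Set.range_comp, ← MonoidHom.map_closure, hg,
      Subgroup.map_top_of_surjective _ QuotientGroup.mk_surjective]
  refine bijective_of_map_generator_eq_single (A := Additive (Abelianization G))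
    (t := fun i => Additive.ofMul (Abelianization.of (g i)))
    (f := (Abelianization.lift χ).toAdditiveLeft) ?_ hgn hχ
  have hadd := congrArg Subgroup.toAddSubgroup hcl
  rwa [Subgroup.toAddSubgroup_closure] at hadd

theorem abelianization_of_sq_eq_one_of_conj_eq_inv {G : Type*} [Group G] {d g : G}
    (h : d * g * d⁻¹ = g⁻¹) : Abelianization.of g ^ 2 = 1 := by
  have hof := congrArg Abelianization.of h
  rw [map_mul, map_mul, map_inv, map_inv, mul_inv_cancel_comm, eq_inv_iff_mul_eq_one] at hof
  rwa [sq]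

theorem mul_apply_eq_of_ne {R : Type*} [NonUnitalNonAssocSemiring R] {i j : Fin 2}
    (M N : Matrix (Fin 2) (Fin 2) R) (hij : i ≠ j) (k : Fin 2) :
    (M * N) i k = M i i * N i k + M i j * N j k := by
  fin_cases i <;> fin_cases j <;> simp [Matrix.mul_apply, add_comm] at hij ⊢

section

variable {R : Type*} [CommRing R]

theorem apply_mul_apply_sub_eq_one_of_ne {i j : Fin 2} (A : SL(2, R)) (hij : i ≠ j) :
    A i i * A j j - A i j * A j i = 1 := by
  have hdet := A.det_coe
  rw [det_fin_two] at hdet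
  fin_cases i <;> fin_cases j <;> simp at hij ⊢ <;> linear_combination hdet

/-- The diagonal matrix `diag(u, u⁻¹)`. -/
def unitDiag : Rˣ →* SL(2, R) where
  toFun u := ⟨diagonal ![u, ↑u⁻¹], by simp⟩
  map_one' := by ext i j; fin_cases i <;> fin_cases j <;> simp
  map_mul' u v := by
    refine Subtype.ext ((diagonal_mul_diagonal _ _).trans ?_).symm
    ext i j
    fin_cases i <;> fin_cases j <;> simp [mul_comm]

theorem coe_unitDiag (u : Rˣ) :
    (unitDiag u : Matrix (Fin 2) (Fin 2) R) = diagonal ![(u : R), ↑u⁻¹] := rfl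

theorem coe_inv_eq_neg_of_sq_eq_neg_one {u : Rˣ} (hu : (u : R) ^ 2 = -1) :
    ((u⁻¹ : Rˣ) : R) = -u :=
  Units.inv_eq_of_mul_eq_one_right (by linear_combination -hu)

theorem unitDiag_mul_transvection_mul_inv {u : Rˣ} (hu : (u : R) ^ 2 = -1) {i j : Fin 2}
    (hij : i ≠ j) (x : R) :
    unitDiag u * SpecialLinearGroup.transvection hij x * (unitDiag u)⁻¹ =
      (SpecialLinearGroup.transvection hij x)⁻¹ := by
  rw [mul_inv_eq_iff_eq_mul, SpecialLinearGroup.transvection_inv]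
  refine Subtype.ext ?_
  change diagonal ![(u : R), ↑u⁻¹] * transvection i j x =
    transvection i j (-x) * diagonal ![(u : R), ↑u⁻¹]
  ext a b
  fin_cases i <;> fin_cases j <;> fin_cases a <;> fin_cases b <;>
    simp [transvection, coe_inv_eq_neg_of_sq_eq_neg_one hu, mul_comm] at hij ⊢

theorem unitDiag_sq_eq_neg_one {u : Rˣ} (hu : (u : R) ^ 2 = -1) : unitDiag u ^ 2 = -1 := by
  refine Subtype.ext ?_
  change diagonal ![(u : R), ↑u⁻¹] ^ 2 = -1
  ext a b
  fin_cases a <;> fin_cases b <;> simp [diagonal_pow, hu, coe_inv_eq_neg_of_sq_eq_neg_one hu]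

theorem eq_unitDiag_mul_transvection {A : SL(2, R)} {u : Rˣ} (hu : A 0 0 = u) (h : A 1 0 = 0) :
    A = unitDiag u * SpecialLinearGroup.transvection zero_ne_one (A 1 1 * A 0 1) := by
  have h11 : A 1 1 = (u⁻¹ : Rˣ) := by
    rw [eq_comm]
    refine Units.inv_eq_of_mul_eq_one_right ?_
    linear_combination apply_mul_apply_sub_eq_one_of_ne A zero_ne_one - A 1 1 * hu + A 0 1 * h
  refine Subtype.ext ?_
  change A.1 = diagonal ![(u : R), ↑u⁻¹] * transvection 0 1 (A 1 1 * A 0 1)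
  ext a b
  fin_cases a <;> fin_cases b <;> simp [transvection, hu, h, h11]

/-- The principal congruence subgroup of level `l` in `SL(2, R)`, rather than in `PSL(2, R)`. -/
def principalCongruence (l : R) : Subgroup SL(2, R) :=
  (SpecialLinearGroup.map (Ideal.Quotient.mk (Ideal.span {l}))).ker

namespace principalCongruence

variable {l : R} {A B : SL(2, R)} {i j : Fin 2}

theorem mem_iff :
    A ∈ principalCongruence l ↔ ∀ i j, l ∣ A i j - (1 : Matrix (Fin 2) (Fin 2) R) i j := by
  rw [principalCongruence, MonoidHom.mem_ker, Matrix.SpecialLinearGroup.ext_iff]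
  refine forall₂_congr fun i j => ?_
  simp only [← Ideal.mem_span_singleton, ← Ideal.Quotient.eq]
  obtain rfl | hij := eq_or_ne i j <;> simp [*]

theorem dvd_apply_of_ne (hA : A ∈ principalCongruence l) (hij : i ≠ j) : l ∣ A i j := by
  simpa [hij] using mem_iff.1 hA i j

theorem dvd_apply_self_sub_one (hA : A ∈ principalCongruence l) (i : Fin 2) :
    l ∣ A i i - 1 := by
  simpa using mem_iff.1 hA i i

theorem transvection_mem (hij : i ≠ j) {x : R} (hx : l ∣ x) :
    SpecialLinearGroup.transvection hij x ∈ principalCongruence l := by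
  refine mem_iff.2 fun a b => ?_
  change l ∣ (1 + single i j x) a b - (1 : Matrix _ _ R) a b
  rw [Matrix.add_apply, add_sub_cancel_left, single_apply]
  split_ifs
  · exact hx
  · exact dvd_zero l

theorem unitDiag_mem {u : Rˣ} (hu : l ∣ (u : R) - 1) :
    unitDiag u ∈ principalCongruence l := by
  have hu' : l ∣ ((u⁻¹ : Rˣ) : R) - 1 := by
    rw [← dvd_neg]
    convert hu.mul_left ((u⁻¹ : Rˣ) : R) using 1
    simp [mul_sub]
  refine mem_iff.2 fun a b => ?_
  fin_cases a <;> fin_cases b <;> simp [coe_unitDiag, hu, hu']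

theorem sq_dvd_apply_self_sq_sub_one (hl : l ∣ 2) (hA : A ∈ principalCongruence l) (i : Fin 2) :
    l ^ 2 ∣ A i i ^ 2 - 1 := by
  have hsub := dvd_apply_self_sub_one hA i
  have hadd : l ∣ A i i + 1 := by
    convert dvd_add hsub hl using 1
    ring
  convert mul_dvd_mul hsub hadd using 1 <;> ring

theorem sq_dvd_apply_mul_apply_sub_one (hA : A ∈ principalCongruence l) (hij : i ≠ j) :
    l ^ 2 ∣ A i i * A j j - 1 := by
  rw [sub_eq_iff_eq_add.1 (apply_mul_apply_sub_eq_one_of_ne A hij), add_sub_cancel_left, sq]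
  exact mul_dvd_mul (dvd_apply_of_ne hA hij) (dvd_apply_of_ne hA hij.symm)

theorem sq_dvd_mul_apply_self_sub (hA : A ∈ principalCongruence l)
    (hB : B ∈ principalCongruence l) (i : Fin 2) :
    l ^ 2 ∣ (A * B) i i - A i i * B i i := by
  obtain ⟨j, hij⟩ := exists_ne i
  change l ^ 2 ∣ (A.1 * B.1) i i - A i i * B i i
  rw [mul_apply_eq_of_ne A.1 B.1 hij.symm, add_sub_cancel_left, sq]
  exact mul_dvd_mul (dvd_apply_of_ne hA hij.symm) (dvd_apply_of_ne hB hij)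

theorem cube_dvd_mul_apply_mul_sub (hl : l ∣ 2) (hA : A ∈ principalCongruence l)
    (hB : B ∈ principalCongruence l) (hij : i ≠ j) :
    l ^ 3 ∣ (A * B) i i * (A * B) i j - (A i i * A i j + B i i * B i j) := by
  obtain ⟨x, hx⟩ := dvd_apply_of_ne hA hij
  obtain ⟨y, hy⟩ := dvd_apply_of_ne hB hij
  obtain ⟨p, hp⟩ := sq_dvd_mul_apply_self_sub hA hB i
  obtain ⟨q, hq⟩ := sq_dvd_apply_self_sq_sub_one hl hA i
  obtain ⟨r, hr⟩ := sq_dvd_apply_mul_apply_sub_one hB hij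
  have hAB : (A * B) i j = A i i * B i j + A i j * B j j := mul_apply_eq_of_ne A.1 B.1 hij j
  refine ⟨p * (A i i * y + x * B j j) + B i i * y * q + A i i * x * r, ?_⟩
  linear_combination (A * B) i j * hp + (A i i * B i i + l ^ 2 * p) * hAB +
    (A i i * B i i * B j j + l ^ 2 * p * B j j - A i i) * hx +
    (A i i ^ 2 * B i i + l ^ 2 * p * A i i - B i i) * hy +
    l * B i i * y * hq + l * A i i * x * hr

variable (l) in
/-- The transvections `1 + l x E_ij` as a homomorphism from the additive group of `R`. -/
def elementary (hij : i ≠ j) : Multiplicative R →* principalCongruence l :=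
  .mk' (fun x => ⟨SpecialLinearGroup.transvection hij (l * x.toAdd),
    transvection_mem hij (dvd_mul_right l _)⟩) fun x y => Subtype.ext <| by
      simp [mul_add, SpecialLinearGroup.transvection_add]

theorem coe_elementary (hij : i ≠ j) (x : R) :
    ((elementary l hij (.ofAdd x) : SL(2, R)) : Matrix (Fin 2) (Fin 2) R) =
      transvection i j (l * x) := rfl

theorem elementary_mul_apply_same (hij : i ≠ j) (x : R) (A : SL(2, R)) (k : Fin 2) :
    ((elementary l hij (.ofAdd x) : SL(2, R)) * A) i k = A i k + l * x * A j k :=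
  transvection_mul_apply_same ..

theorem elementary_mul_apply_of_ne (hij : i ≠ j) (x : R) (A : SL(2, R)) (k : Fin 2) :
    ((elementary l hij (.ofAdd x) : SL(2, R)) * A) j k = A j k :=
  transvection_mul_apply_of_ne _ _ _ _ hij.symm ..

theorem dvd_apply_iff_not_dvd_apply (hl : ¬IsUnit l) (hA : A ∈ principalCongruence l)
    (hij : i ≠ j) (k : Fin 2) : l ∣ A i k ↔ ¬l ∣ A j k := by
  have hself (m : Fin 2) : ¬l ∣ A m m := fun h =>
    hl (isUnit_of_dvd_one ((dvd_sub_right h).1 (dvd_apply_self_sub_one hA m)))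
  obtain rfl | hik := eq_or_ne k i
  · simp [hself, dvd_apply_of_ne hA hij.symm]
  · obtain rfl : k = j := by lia
    simp [hself, dvd_apply_of_ne hA hij]

theorem mem_of_apply_one_zero_eq_zero {H : Subgroup (principalCongruence l)}
    (helem : ∀ {i j : Fin 2} (hij : i ≠ j) (x : R), elementary l hij (.ofAdd x) ∈ H)
    (hdiag : ∀ (u : Rˣ) (hu : l ∣ (u : R) - 1), ⟨unitDiag u, unitDiag_mem hu⟩ ∈ H)
    {A : principalCongruence l} (hA : A.1 1 0 = 0) : A ∈ H := by
  obtain ⟨x, hx⟩ := dvd_apply_of_ne A.2 zero_ne_one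
  have hdet : A.1 0 0 * A.1 1 1 = 1 := by
    linear_combination apply_mul_apply_sub_eq_one_of_ne A.1 zero_ne_one + A.1 0 1 * hA
  let u : Rˣ := .mkOfMulEqOne _ _ hdet
  have hu : l ∣ (u : R) - 1 := dvd_apply_self_sub_one A.2 0
  have hfac :
      A = ⟨unitDiag u, unitDiag_mem hu⟩ * elementary l zero_ne_one (.ofAdd (A.1 1 1 * x)) := by
    refine Subtype.ext ((eq_unitDiag_mul_transvection (u := u) rfl hA).trans ?_)
    rw [hx, mul_left_comm]
    rfl
  rw [hfac]
  exact H.mul_mem (hdiag u hu) (helem _ _)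

theorem eq_top_of_elementary_mem_of_unitDiag_mem (hl : ¬IsUnit l) {N : R → ℕ}
    (hdiv : ∀ x y : R, y ≠ 0 → (l ∣ x ↔ ¬l ∣ y) → ∃ q, N (x + l * q * y) < N y)
    {H : Subgroup (principalCongruence l)}
    (helem : ∀ {i j : Fin 2} (hij : i ≠ j) (x : R), elementary l hij (.ofAdd x) ∈ H)
    (hdiag : ∀ (u : Rˣ) (hu : l ∣ (u : R) - 1), ⟨unitDiag u, unitDiag_mem hu⟩ ∈ H) : H = ⊤ := by
  refine (Subgroup.eq_top_iff' H).2 fun A => ?_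
  induction hn : N (A.1 0 0) + N (A.1 1 0) using Nat.strong_induction_on generalizing A with
  | _ n ih =>
  have reduce {i j : Fin 2} (hij : i ≠ j) (hj : A.1 j 0 ≠ 0)
      (hle : N (A.1 j 0) ≤ N (A.1 i 0)) : A ∈ H := by
    obtain ⟨q, hq⟩ := hdiv _ _ hj (dvd_apply_iff_not_dvd_apply hl A.2 hij 0)
    rw [← H.mul_mem_cancel_left (helem hij q)]
    refine ih _ ?_ _ rfl
    have hsum (B : SL(2, R)) :
        N (B 0 0) + N (B 1 0) = N (B i 0) + N (B j 0) := by
      obtain ⟨rfl, rfl⟩ | ⟨rfl, rfl⟩ : (i = 0 ∧ j = 1) ∨ (i = 1 ∧ j = 0) := by lia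
      · rfl
      · exact add_comm _ _
    calc N ((elementary l hij (.ofAdd q) * A).1 0 0) + N ((elementary l hij (.ofAdd q) * A).1 1 0)
        = N (A.1 i 0 + l * q * A.1 j 0) + N (A.1 j 0) := by
          rw [hsum, ← elementary_mul_apply_same hij,
            ← elementary_mul_apply_of_ne (l := l) hij q A.1, Subgroup.coe_mul]
      _ < N (A.1 i 0) + N (A.1 j 0) := by lia
      _ = n := by rw [← hsum, hn]
  by_cases hc : A.1 1 0 = 0
  · exact mem_of_apply_one_zero_eq_zero helem hdiag hc
  have ha : A.1 0 0 ≠ 0 := fun h => by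
    have := dvd_apply_iff_not_dvd_apply hl A.2 zero_ne_one 0
    simp [h, dvd_apply_of_ne A.2 one_ne_zero] at this
  obtain hle | hle := le_total (N (A.1 1 0)) (N (A.1 0 0))
  · exact reduce zero_ne_one hc hle
  · exact reduce one_ne_zero ha hle

end principalCongruence

end

/-- The prime `λ = 1 + i` of `ℤ[i]`. -/
def oneAddI : GaussianInt := ⟨1, 1⟩

/-- The imaginary unit `i` as a unit of `ℤ[i]`. -/
def unitI : GaussianIntˣ := ⟨⟨0, 1⟩, ⟨0, -1⟩, by decide, by decide⟩

namespace oneAddI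

theorem dvd_iff_even_re_add_im {z : GaussianInt} : oneAddI ∣ z ↔ Even (z.re + z.im) := by
  constructor
  · rintro ⟨w, rfl⟩
    exact ⟨w.re, by simp [oneAddI]⟩
  · rintro ⟨k, hk⟩
    exact ⟨⟨k, z.im - k⟩, by ext <;> simp [oneAddI]; lia⟩

theorem dvd_iff_even_norm {z : GaussianInt} : oneAddI ∣ z ↔ Even z.norm := by
  simp [dvd_iff_even_re_add_im, Zsqrtd.norm_def, Int.even_add, Int.even_mul]

theorem not_isUnit : ¬IsUnit oneAddI := by
  rw [← Zsqrtd.norm_eq_one_iff]; decide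

theorem dvd_two : oneAddI ∣ 2 := dvd_iff_even_re_add_im.2 (by decide)

theorem two_dvd_sq : 2 ∣ oneAddI ^ 2 := ⟨unitI, by decide⟩

theorem ne_zero : oneAddI ≠ 0 := by decide

theorem dvd_unitI_sub_one : oneAddI ∣ unitI - 1 := dvd_iff_even_re_add_im.2 (by decide)

theorem norm_eq : oneAddI.norm = 2 := by decide

end oneAddI

theorem two_mul_norm_mod_le (x : GaussianInt) {y : GaussianInt} (hy : y ≠ 0) :
    2 * (x % y).norm ≤ y.norm := by
  have hy' : (y : ℂ) ≠ 0 := by simpa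
  have hround : Complex.normSq ((x / y : ℂ) - (x / y : GaussianInt)) ≤ 1 / 2 := by
    rw [Complex.normSq_apply, Complex.sub_re, Complex.sub_im, GaussianInt.toComplex_re_div,
      GaussianInt.toComplex_im_div]
    have hre := abs_le.1 (abs_sub_round (x / y : ℂ).re)
    have him := abs_le.1 (abs_sub_round (x / y : ℂ).im)
    nlinarith
  have : (2 * (x % y).norm : ℝ) ≤ y.norm := by
    calc (2 * (x % y).norm : ℝ)
        = 2 * (Complex.normSq y * Complex.normSq ((x / y : ℂ) - (x / y : GaussianInt))) := by
          rw [GaussianInt.intCast_real_norm, GaussianInt.mod_def, ← Complex.normSq_mul,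
            mul_sub, mul_div_cancel₀ _ hy']
          simp
      _ ≤ 2 * (Complex.normSq y * (1 / 2)) := by gcongr; exact Complex.normSq_nonneg _
      _ = y.norm := by rw [GaussianInt.intCast_real_norm]; ring
  exact_mod_cast this

open oneAddI in
theorem exists_natAbs_norm_add_lt {x y : GaussianInt} (hy : y ≠ 0)
    (hxy : oneAddI ∣ x ↔ ¬oneAddI ∣ y) :
    ∃ q, (x + oneAddI * q * y).norm.natAbs < y.norm.natAbs := by
  refine ⟨-(x / (oneAddI * y)), ?_⟩
  set r := x + oneAddI * -(x / (oneAddI * y)) * y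
  have hrem : r = x % (oneAddI * y) := by
    rw [GaussianInt.mod_def]; ring
  have hle := two_mul_norm_mod_le x (mul_ne_zero ne_zero hy)
  rw [Zsqrtd.norm_mul, norm_eq, ← hrem] at hle
  have hdvd : oneAddI ∣ r ↔ oneAddI ∣ x := dvd_add_left ((dvd_mul_right _ _).mul_right _)
  have hne : r.norm ≠ y.norm := fun h => by
    rw [← hdvd, dvd_iff_even_norm, dvd_iff_even_norm, h] at hxy
    exact iff_not_self hxy
  have hnonneg := GaussianInt.norm_nonneg r
  lia

theorem mem_zpowers_unitI (u : GaussianIntˣ) : u ∈ Subgroup.zpowers unitI := by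
  have hnorm : (u : GaussianInt).norm = 1 := (Zsqrtd.norm_eq_one_iff' (by decide) _).2 u.isUnit
  have hu : (u : GaussianInt) ∈ ({1, ⟨0, 1⟩, -1, ⟨0, -1⟩} : Set GaussianInt) := by
    generalize (u : GaussianInt) = z at hnorm
    obtain ⟨a, b⟩ := z
    have hsq : a * a + b * b = 1 := by simpa [Zsqrtd.norm_def] using hnorm
    obtain ⟨ha, ha'⟩ : -1 ≤ a ∧ a ≤ 1 := abs_le.1 (abs_le_one_iff_mul_self_le_one.2 (by nlinarith))
    obtain ⟨hb, hb'⟩ : -1 ≤ b ∧ b ≤ 1 := abs_le.1 (abs_le_one_iff_mul_self_le_one.2 (by nlinarith))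
    interval_cases a <;> interval_cases b <;> simp_all [Zsqrtd.ext_iff]
  rcases hu with hu | hu | hu | hu
  · exact ⟨0, Units.ext hu.symm⟩
  · exact ⟨1, Units.ext hu.symm⟩
  · exact ⟨2, Units.ext hu.symm⟩
  · exact ⟨3, Units.ext hu.symm⟩

theorem intCast_re_eq_of_two_dvd_sub {z w : GaussianInt} (h : 2 ∣ z - w) :
    (z.re : ZMod 2) = w.re := by
  obtain ⟨v, hv⟩ := h
  rw [eq_comm, ZMod.intCast_eq_intCast_iff_dvd_sub]
  exact ⟨v.re, by simpa using congrArg Zsqrtd.re hv⟩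

theorem intCast_im_eq_of_two_dvd_sub {z w : GaussianInt} (h : 2 ∣ z - w) :
    (z.im : ZMod 2) = w.im := by
  obtain ⟨v, hv⟩ := h
  rw [eq_comm, ZMod.intCast_eq_intCast_iff_dvd_sub]
  exact ⟨v.im, by simpa using congrArg Zsqrtd.im hv⟩

theorem intCast_im_mul {z w : GaussianInt} (hz : oneAddI ∣ z - 1) (hw : oneAddI ∣ w - 1) :
    ((z * w).im : ZMod 2) = z.im + w.im := by
  have hre {z : GaussianInt} (hz : oneAddI ∣ z - 1) : (z.re : ZMod 2) = 1 + z.im := by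
    rw [oneAddI.dvd_iff_even_re_add_im, ← ZMod.intCast_eq_zero_iff_even] at hz
    push_cast [Zsqrtd.re_sub, Zsqrtd.im_sub, Zsqrtd.re_one, Zsqrtd.im_one] at hz
    grind
  rw [Zsqrtd.im_mul]
  push_cast
  rw [hre hz, hre hw]
  grind

namespace principalCongruence

/-- The number `A i i * (A i j / λ)`, `λ = 1 + i`, whose class modulo `2` is additive in
`A ∈ principalCongruence λ`; the division is exact there for `i ≠ j`. -/
def offDiagQuot (A : SL(2, GaussianInt)) (i j : Fin 2) : GaussianInt :=
  A i i * (A i j / oneAddI)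

variable {A B : SL(2, GaussianInt)} {i j : Fin 2}

theorem oneAddI_mul_offDiagQuot (hA : A ∈ principalCongruence oneAddI) (hij : i ≠ j) :
    oneAddI * offDiagQuot A i j = A i i * A i j := by
  rw [offDiagQuot, mul_left_comm, EuclideanDomain.mul_div_cancel' oneAddI.ne_zero
    (dvd_apply_of_ne hA hij)]

theorem two_dvd_offDiagQuot_mul_sub (hA : A ∈ principalCongruence oneAddI)
    (hB : B ∈ principalCongruence oneAddI) (hij : i ≠ j) :
    2 ∣ offDiagQuot (A * B) i j - (offDiagQuot A i j + offDiagQuot B i j) := by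
  refine oneAddI.two_dvd_sq.trans ?_
  rw [← mul_dvd_mul_iff_left oneAddI.ne_zero, mul_sub, mul_add, oneAddI_mul_offDiagQuot hA hij,
    oneAddI_mul_offDiagQuot hB hij, oneAddI_mul_offDiagQuot (mul_mem hA hB) hij, ← pow_succ']
  exact cube_dvd_mul_apply_mul_sub oneAddI.dvd_two hA hB hij

theorem intCast_im_mul_apply_self (hA : A ∈ principalCongruence oneAddI)
    (hB : B ∈ principalCongruence oneAddI) (i : Fin 2) :
    (((A * B) i i).im : ZMod 2) = (A i i).im + (B i i).im := by
  have h := oneAddI.two_dvd_sq.trans (sq_dvd_mul_apply_self_sub hA hB i)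
  exact (intCast_im_eq_of_two_dvd_sub h).trans
    (intCast_im_mul (dvd_apply_self_sub_one hA i) (dvd_apply_self_sub_one hB i))

/-- The five coordinates in `ℤ/2ℤ` that detect the abelianization of `Γ(1 + i)`. -/
def coords (A : SL(2, GaussianInt)) : Fin 5 → ZMod 2 :=
  ![(offDiagQuot A 0 1).re, (offDiagQuot A 0 1).im,
    (offDiagQuot A 1 0).re, (offDiagQuot A 1 0).im, (A 0 0).im]

theorem coords_mul (hA : A ∈ principalCongruence oneAddI)
    (hB : B ∈ principalCongruence oneAddI) : coords (A * B) = coords A + coords B := by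
  have h01 := two_dvd_offDiagQuot_mul_sub hA hB zero_ne_one
  have h10 := two_dvd_offDiagQuot_mul_sub hA hB one_ne_zero
  ext k
  fin_cases k
  · exact (intCast_re_eq_of_two_dvd_sub h01).trans (Int.cast_add _ _)
  · exact (intCast_im_eq_of_two_dvd_sub h01).trans (Int.cast_add _ _)
  · exact (intCast_re_eq_of_two_dvd_sub h10).trans (Int.cast_add _ _)
  · exact (intCast_im_eq_of_two_dvd_sub h10).trans (Int.cast_add _ _)
  · exact intCast_im_mul_apply_self hA hB 0

/-- The coordinates of `A ∈ principalCongruence (1 + i)` as a homomorphism. -/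
def character : principalCongruence oneAddI →* Multiplicative (Fin 5 → ZMod 2) :=
  .mk' (fun A => .ofAdd (coords A)) fun A B => congrArg _ (coords_mul A.2 B.2)

/-- Generators of `principalCongruence (1 + i)`, in the order dual to `coords`. -/
def generator : Fin 5 → principalCongruence oneAddI :=
  ![elementary oneAddI zero_ne_one (.ofAdd 1), elementary oneAddI zero_ne_one (.ofAdd unitI),
    elementary oneAddI one_ne_zero (.ofAdd 1), elementary oneAddI one_ne_zero (.ofAdd unitI),
    ⟨unitDiag unitI, unitDiag_mem oneAddI.dvd_unitI_sub_one⟩]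

theorem character_generator (k : Fin 5) : character (generator k) = .ofAdd (Pi.single k 1) := by
  refine congrArg Multiplicative.ofAdd ?_
  ext m
  fin_cases k <;> fin_cases m <;>
    simp [coords, generator, offDiagQuot, coe_elementary, transvection, coe_unitDiag, unitI,
      oneAddI.ne_zero]

theorem closure_range_generator : Subgroup.closure (Set.range generator) = ⊤ := by
  have hgen (k : Fin 5) : generator k ∈ Subgroup.closure (Set.range generator) :=
    Subgroup.subset_closure (Set.mem_range_self k)
  refine eq_top_of_elementary_mem_of_unitDiag_mem oneAddI.not_isUnit (N := fun z => z.norm.natAbs)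
    (fun _ _ => exists_natAbs_norm_add_lt) (fun {i j} hij x => ?_) fun u hu => ?_
  · rw [show x = x.re • 1 + x.im • (unitI : GaussianInt) by ext <;> simp [unitI],
      ofAdd_add, ofAdd_zsmul, ofAdd_zsmul, map_mul, map_zpow, map_zpow]
    obtain ⟨rfl, rfl⟩ | ⟨rfl, rfl⟩ : (i = 0 ∧ j = 1) ∨ (i = 1 ∧ j = 0) := by lia
    · exact mul_mem (zpow_mem (hgen 0) _) (zpow_mem (hgen 1) _)
    · exact mul_mem (zpow_mem (hgen 2) _) (zpow_mem (hgen 3) _)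
  · obtain ⟨m, rfl⟩ := mem_zpowers_unitI u
    convert zpow_mem (hgen 4) m using 1
    exact Subtype.ext (map_zpow unitDiag unitI m)

theorem coe_generator_four_sq : (generator 4 : SL(2, GaussianInt)) ^ 2 = -1 :=
  unitDiag_sq_eq_neg_one (by decide)

theorem generator_four_mul_generator_mul_inv {k : Fin 5} (hk : k ≠ 4) :
    generator 4 * generator k * (generator 4)⁻¹ = (generator k)⁻¹ := by
  have hconj {i j : Fin 2} (hij : i ≠ j) (x : Multiplicative GaussianInt) :
      generator 4 * elementary oneAddI hij x * (generator 4)⁻¹ = (elementary oneAddI hij x)⁻¹ :=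
    Subtype.ext (unitDiag_mul_transvection_mul_inv (by decide) hij _)
  fin_cases k
  · exact hconj _ _
  · exact hconj _ _
  · exact hconj _ _
  · exact hconj _ _
  · exact absurd rfl hk

/-- The projection onto `Γ(β)` of its preimage in `SL(2, ℤ[i])`. -/
def projection (β : GaussianInt) : principalCongruence β →* Gamma β :=
  (QuotientGroup.mk' PM).subgroupMap (principalCongruence β)

theorem projection_surjective (β : GaussianInt) : Function.Surjective (projection β) :=
  MonoidHom.subgroupMap_surjective _ _

theorem projection_eq_one_iff {β : GaussianInt} {A : principalCongruence β} :
    projection β A = 1 ↔ (A : SL2Zi) ∈ PM :=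
  Subtype.ext_iff.trans (QuotientGroup.eq_one_iff _)

theorem projection_generator_four_sq : projection oneAddI (generator 4) ^ 2 = 1 := by
  rw [← map_pow, projection_eq_one_iff, SubmonoidClass.coe_pow, coe_generator_four_sq]
  exact Subgroup.mem_zpowers _

theorem ker_projection_le_ker_character : (projection oneAddI).ker ≤ character.ker := by
  intro A hA
  obtain ⟨m, hm⟩ := projection_eq_one_iff.1 hA
  have hpow : A = (generator 4 ^ 2) ^ m := Subtype.ext (by
    rw [SubgroupClass.coe_zpow, SubmonoidClass.coe_pow, coe_generator_four_sq]; exact hm.symm)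
  have hsq : character (generator 4) ^ 2 = 1 := by rw [character_generator]; decide
  rw [MonoidHom.mem_ker, hpow, map_zpow, map_pow, hsq, _root_.one_zpow]

theorem abelianization_of_projection_generator_sq (k : Fin 5) :
    Abelianization.of (projection oneAddI (generator k)) ^ 2 = 1 := by
  obtain rfl | hk := eq_or_ne k 4
  · rw [← map_pow, projection_generator_four_sq, map_one]
  · refine abelianization_of_sq_eq_one_of_conj_eq_inv (d := projection oneAddI (generator 4)) ?_
    rw [← map_inv, ← map_mul, ← map_mul, generator_four_mul_generator_mul_inv hk, map_inv]

theorem closure_range_projection_generator :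
    Subgroup.closure (Set.range (projection oneAddI ∘ generator)) = ⊤ := by
  rw [Set.range_comp, ← MonoidHom.map_closure, closure_range_generator,
    Subgroup.map_top_of_surjective _ (projection_surjective oneAddI)]

end principalCongruence

open principalCongruence in
/-- The abelianization of `Γ(1+i) < PSL(2, ℤ[i])` is isomorphic to `(ℤ/2ℤ)⁵`. -/
theorem abelianization_Gamma_one_one :
    Nonempty (Abelianization ↥(Gamma ⟨1, 1⟩) ≃* Multiplicative (Fin 5 → ZMod 2)) := by
  let χ : Gamma oneAddI →* Multiplicative (Fin 5 → ZMod 2) :=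
    (projection oneAddI).liftOfSurjective (projection_surjective oneAddI)
      ⟨character, ker_projection_le_ker_character⟩
  have hχ (k : Fin 5) : χ (projection oneAddI (generator k)) = .ofAdd (Pi.single k 1) :=
    (MonoidHom.liftOfRightInverse_comp_apply ..).trans (character_generator k)
  exact ⟨.ofBijective (Abelianization.lift χ)
    (bijective_abelianizationLift_of_map_generator_eq_single closure_range_projection_generator
      abelianization_of_projection_generator_sq hχ)⟩
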